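/- arXiv:0901.2912 — 7 statements merged into one kernel-verified Lean document; each statement's English description precedes it below -/
import Mathlib

section
/- Let A be an m×n real matrix, let w ∈ ℝ^n have strictly positive entries, and let K ⊆ {1,…,n}. Suppose that every nonzero vector z in the null space of A satisfies Σ_{i∈K} w_i|z_i| < Σ_{i∉K} w_i|z_i|. Then every vector x ∈ ℝ^n whose support is contained in K is the unique minimizer of the weighted ℓ1 norm ‖·‖_{w,1} over the affine set {x' ∈ ℝ^n : A x' = A x}; that is, for every x' ≠ x with A x' = A x one has ‖x‖_{w,1} < ‖x'‖_{w,1}. -/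
/-- If every nonzero vector `z` in the null space of `A` satisfies
`∑_{i∈K} w_i |z_i| < ∑_{i∉K} w_i |z_i|`, then every vector `x` supported on `K`
is the unique minimizer of the weighted ℓ1 norm over `{x' : A x' = A x}`. -/
theorem weighted_l1_unique_recovery_of_strict_nullspace_condition
    (m n : ℕ) (A : Matrix (Fin m) (Fin n) ℝ) (w : Fin n → ℝ)
    (hw : ∀ i, 0 < w i) (K : Finset (Fin n))
    (hnull : ∀ z : Fin n → ℝ, z ≠ 0 → A.mulVec z = 0 →
      ∑ i ∈ K, w i * |z i| < ∑ i ∈ Kᶜ, w i * |z i|) :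
    ∀ x : Fin n → ℝ, (∀ i, x i ≠ 0 → i ∈ K) →
      ∀ x' : Fin n → ℝ, x' ≠ x → A.mulVec x' = A.mulVec x →
        ∑ i, w i * |x i| < ∑ i, w i * |x' i| := by
  intro x hx x' hne hA
  have h := hnull (x' - x) (sub_ne_zero.mpr hne) (by rw [Matrix.mulVec_sub, hA, sub_self])
  have h0 : ∀ i ∈ Kᶜ, x i = 0 := by
    intro i hi
    by_contra hc
    exact (Finset.mem_compl.mp hi) (hx i hc)
  rw [← Finset.sum_add_sum_compl K (fun i => w i * |x i|),
    ← Finset.sum_add_sum_compl K (fun i => w i * |x' i|)]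
  have h1 : ∑ i ∈ Kᶜ, w i * |x i| = 0 :=
    Finset.sum_eq_zero (fun i hi => by simp [h0 i hi])
  have h2 : ∑ i ∈ Kᶜ, w i * |(x' - x) i| = ∑ i ∈ Kᶜ, w i * |x' i| :=
    Finset.sum_congr rfl (fun i hi => by simp [h0 i hi])
  have h3 : ∑ i ∈ K, w i * |x i| ≤ ∑ i ∈ K, w i * |x' i| + ∑ i ∈ K, w i * |(x' - x) i| := by
    rw [← Finset.sum_add_distrib]
    refine Finset.sum_le_sum (fun i _ => ?_)
    rw [← mul_add]
    refine mul_le_mul_of_nonneg_left ?_ (hw i).le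
    have := abs_sub_abs_le_abs_sub (x i) (x' i)
    rw [abs_sub_comm] at this
    simp only [Pi.sub_apply]
    linarith
  linarith
end

section
/- Let A be an m×n real matrix, let w ∈ ℝ^n have strictly positive entries, and let K ⊆ {1,…,n}. Suppose that every vector x ∈ ℝ^n whose support is contained in K is a minimizer (not necessarily unique) of the weighted ℓ1 norm ‖·‖_{w,1} over the affine set {x' : A x' = A x}. Then every vector z in the null space of A satisfies Σ_{i∈K} w_i|z_i| ≤ Σ_{i∉K} w_i|z_i|. -/
/-- If every vector `x` supported on `K` is a (not necessarily unique)
minimizer of the weighted ℓ1 norm over `{x' : A x' = A x}`, then every vector `z`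
in the null space of `A` satisfies `∑_{i∈K} w_i |z_i| ≤ ∑_{i∉K} w_i |z_i|`. -/
theorem nullspace_condition_of_weighted_l1_recovery
    (m n : ℕ) (A : Matrix (Fin m) (Fin n) ℝ) (w : Fin n → ℝ)
    (hw : ∀ i, 0 < w i) (K : Finset (Fin n))
    (hrec : ∀ x : Fin n → ℝ, (∀ i, x i ≠ 0 → i ∈ K) →
      ∀ x' : Fin n → ℝ, A.mulVec x' = A.mulVec x →
        ∑ i, w i * |x i| ≤ ∑ i, w i * |x' i|) :
    ∀ z : Fin n → ℝ, A.mulVec z = 0 →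
      ∑ i ∈ K, w i * |z i| ≤ ∑ i ∈ Kᶜ, w i * |z i| := by
  intro z hz
  have h := hrec (fun i => if i ∈ K then z i else 0)
    (fun i hi => by by_contra hk; simp [hk] at hi)
    ((fun i => if i ∈ K then z i else 0) - z)
    (by rw [Matrix.mulVec_sub, hz, sub_zero])
  have h1 : ∑ i ∈ K, w i * |if i ∈ K then z i else 0| = ∑ i ∈ K, w i * |z i| :=
    Finset.sum_congr rfl (fun i hi => by simp [hi])
  have h2 : ∑ i ∈ Kᶜ, w i * |if i ∈ K then z i else 0| = 0 :=
    Finset.sum_eq_zero (fun i hi => by simp [Finset.mem_compl.1 hi])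
  have h3 : ∑ i ∈ K, w i * |((fun i => if i ∈ K then z i else 0) - z) i| = 0 :=
    Finset.sum_eq_zero (fun i hi => by simp [hi])
  have h4 : ∑ i ∈ Kᶜ, w i * |((fun i => if i ∈ K then z i else 0) - z) i|
      = ∑ i ∈ Kᶜ, w i * |z i| :=
    Finset.sum_congr rfl (fun i hi => by simp [Finset.mem_compl.1 hi])
  have e1 := Finset.sum_add_sum_compl K (fun i => w i * |if i ∈ K then z i else 0|)
  have e2 := Finset.sum_add_sum_compl K
    (fun i => w i * |((fun i => if i ∈ K then z i else 0) - z) i|)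
  linarith
end

section
/- Let A be an m×n real matrix, let w ∈ ℝ^n have strictly positive entries, and let K ⊆ {1,…,n}. Suppose that every vector z in the null space of A satisfies Σ_{i∈K} w_i|z_i| ≤ Σ_{i∉K} w_i|z_i|. Then every vector x ∈ ℝ^n whose support is contained in K is a minimizer of the weighted ℓ1 norm ‖·‖_{w,1} over the affine set {x' : A x' = A x}; that is, ‖x‖_{w,1} ≤ ‖x'‖_{w,1} for every x' with A x' = A x. -/
/-- If every vector `z` in the null space of `A` satisfies
`∑_{i∈K} w_i |z_i| ≤ ∑_{i∉K} w_i |z_i|`, then every vector `x` supported on `K`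
is a minimizer of the weighted ℓ1 norm over `{x' : A x' = A x}`. -/
theorem weighted_l1_recovery_of_nullspace_condition
    (m n : ℕ) (A : Matrix (Fin m) (Fin n) ℝ) (w : Fin n → ℝ)
    (hw : ∀ i, 0 < w i) (K : Finset (Fin n))
    (hnull : ∀ z : Fin n → ℝ, A.mulVec z = 0 →
      ∑ i ∈ K, w i * |z i| ≤ ∑ i ∈ Kᶜ, w i * |z i|) :
    ∀ x : Fin n → ℝ, (∀ i, x i ≠ 0 → i ∈ K) →
      ∀ x' : Fin n → ℝ, A.mulVec x' = A.mulVec x →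
        ∑ i, w i * |x i| ≤ ∑ i, w i * |x' i| := by
  intro x hx x' hA
  have h := hnull (x' - x) (by rw [Matrix.mulVec_sub, hA, sub_self])
  have h0 : ∀ i ∈ Kᶜ, x i = 0 := by
    intro i hi
    by_contra hne
    exact (Finset.mem_compl.mp hi) (hx i hne)
  have h1 : ∑ i ∈ Kᶜ, w i * |(x' - x) i| = ∑ i ∈ Kᶜ, w i * |x' i| := by
    refine Finset.sum_congr rfl fun i hi => ?_
    rw [Pi.sub_apply, h0 i hi, sub_zero]
  have h2 : ∑ i ∈ Kᶜ, w i * |x i| = 0 := by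
    refine Finset.sum_eq_zero fun i hi => ?_
    rw [h0 i hi, abs_zero, mul_zero]
  have h3 : ∑ i ∈ K, w i * |x i| ≤ ∑ i ∈ K, w i * |x' i| + ∑ i ∈ K, w i * |(x' - x) i| := by
    rw [← Finset.sum_add_distrib]
    refine Finset.sum_le_sum fun i _ => ?_
    rw [← mul_add]
    refine mul_le_mul_of_nonneg_left ?_ (hw i).le
    have := abs_sub_abs_le_abs_sub (x i) (x' i)
    rw [abs_sub_comm] at this
    rw [Pi.sub_apply]
    linarith
  rw [← Finset.sum_add_sum_compl K (fun i => w i * |x i|),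
    ← Finset.sum_add_sum_compl K (fun i => w i * |x' i|)]
  linarith
end

section
/- Let 1 ≤ k < l, let w₁,…,w_l > 0, and set Ω = Σ_{p=1}^{k} w_p². Define the l×(l−k) real matrix A by A_{i,j} = −(1/Ω) w_i w_{k+j}² for 1 ≤ i ≤ k and 1 ≤ j ≤ l−k, A_{i,j} = w_i when k+1 ≤ i ≤ l and j = i−k, and A_{i,j} = 0 otherwise. Then det(AᵀA) = (Π_{q=k+1}^{l} w_q²) · (Ω + Σ_{q=k+1}^{l} w_q²)/Ω. In particular, if w_p takes the value W₁ for exactly t₁ of the indices p ∈ {k+1,…,l} and the value W₂ for the remaining t₂ = l−k−t₁ of them, then √(det(AᵀA)) = W₁^{t₁} W₂^{t₂} √((Ω + t₁W₁² + t₂W₂²)/Ω). -/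
open Matrix

theorem filter_eq_map_aux (k l : ℕ) (e : Fin (l - k) ↪ Fin l)
    (he : ∀ j, (e j : ℕ) = k + (j : ℕ)) :
    Finset.univ.filter (fun q : Fin l => k ≤ (q : ℕ)) = Finset.univ.map e := by
  ext q
  simp only [Finset.mem_filter, Finset.mem_univ, true_and, Finset.mem_map]
  constructor
  · intro h
    refine ⟨⟨q - k, by omega⟩, ?_⟩
    apply Fin.ext
    rw [he]
    simp only
    omega
  · rintro ⟨j, rfl⟩
    rw [he]
    omega

/-- The Jacobian determinant of the change of variables in the internal
angle derivation: `det(AᵀA) = (∏_{q>k} w_q²)·(Ω + ∑_{q>k} w_q²)/Ω`, and its specialization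
when the weights on `{k+1,…,l}` take only two values `W₁` (on `t₁` indices) and `W₂`
(on the remaining `t₂ = l−k−t₁` indices). -/
theorem jacobian_determinant_internal_angle
    (k l : ℕ) (hk : 1 ≤ k) (hkl : k < l)
    (w : Fin l → ℝ) (hw : ∀ i, 0 < w i)
    (Ω : ℝ) (hΩ : Ω = ∑ p ∈ Finset.univ.filter (fun p : Fin l => (p : ℕ) < k), (w p) ^ 2)
    (A : Matrix (Fin l) (Fin (l - k)) ℝ)
    (hA : ∀ (i : Fin l) (j : Fin (l - k)),
      A i j = if (i : ℕ) < k then -(1 / Ω) * w i * (w ⟨k + (j : ℕ), by omega⟩) ^ 2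
        else if (i : ℕ) = k + (j : ℕ) then w i else 0) :
    (Aᵀ * A).det =
      (∏ q ∈ Finset.univ.filter (fun q : Fin l => k ≤ (q : ℕ)), (w q) ^ 2) *
        ((Ω + ∑ q ∈ Finset.univ.filter (fun q : Fin l => k ≤ (q : ℕ)), (w q) ^ 2) / Ω) ∧
    ∀ (W₁ W₂ : ℝ) (t₁ t₂ : ℕ) (S : Finset (Fin l)),
      (∀ q ∈ S, k ≤ (q : ℕ)) → S.card = t₁ → t₁ + t₂ = l - k →
      (∀ q : Fin l, k ≤ (q : ℕ) → (q ∈ S → w q = W₁) ∧ (q ∉ S → w q = W₂)) →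
      Real.sqrt (Aᵀ * A).det =
        W₁ ^ t₁ * W₂ ^ t₂ * Real.sqrt ((Ω + t₁ * W₁ ^ 2 + t₂ * W₂ ^ 2) / Ω) := by
  have hΩpos : 0 < Ω := by
    rw [hΩ]
    apply Finset.sum_pos
    · intro i _
      exact pow_pos (hw i) 2
    · exact ⟨⟨0, by omega⟩, by simp; omega⟩
  let e : Fin (l - k) ↪ Fin l := ⟨fun j => ⟨k + (j : ℕ), by omega⟩, by
    intro a b h
    simp only [Fin.mk.injEq] at h
    apply Fin.ext
    omega⟩
  have he : ∀ j, (e j : ℕ) = k + (j : ℕ) := fun j => rfl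
  have hF := filter_eq_map_aux k l e he
  have hA' : ∀ i j, A i j = if (i : ℕ) < k then -(1 / Ω) * w i * (w (e j)) ^ 2
        else if i = e j then w i else 0 := by
    intro i j
    rw [hA]
    simp only [Fin.ext_iff, he]
    rfl
  have hlt : ∀ j, ¬ ((e j : ℕ) < k) := by
    intro j
    rw [he]
    omega
  have hM : Aᵀ * A = Matrix.diagonal (fun j => (w (e j)) ^ 2) *
      (1 + replicateCol Unit (fun _ => 1 / Ω) * replicateRow Unit (fun j => (w (e j)) ^ 2)) := by
    ext a b
    rw [Matrix.diagonal_mul, Matrix.mul_apply, Matrix.add_apply, Matrix.mul_apply]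
    simp only [Matrix.transpose_apply, replicateCol_apply, replicateRow_apply,
      Finset.univ_unique, Finset.sum_singleton]
    rw [← Finset.sum_filter_add_sum_filter_not Finset.univ (fun p : Fin l => (p : ℕ) < k)]
    have h1 : ∑ x ∈ Finset.univ.filter (fun p : Fin l => (p : ℕ) < k), A x a * A x b =
        (w (e a)) ^ 2 * (1 / Ω * (w (e b)) ^ 2) := by
      have : ∀ x ∈ Finset.univ.filter (fun p : Fin l => (p : ℕ) < k), A x a * A x b =
          (w x) ^ 2 * ((1 / Ω) ^ 2 * (w (e a)) ^ 2 * (w (e b)) ^ 2) := by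
        intro x hx
        have hx' := (Finset.mem_filter.mp hx).2
        rw [hA', hA', if_pos hx', if_pos hx']
        ring
      rw [Finset.sum_congr rfl this, ← Finset.sum_mul, ← hΩ]
      field_simp
    have h2 : ∑ x ∈ Finset.univ.filter (fun p : Fin l => ¬ (p : ℕ) < k), A x a * A x b =
        (w (e a)) ^ 2 * (1 : Matrix (Fin (l - k)) (Fin (l - k)) ℝ) a b := by
      simp only [not_lt]
      rw [hF, Finset.sum_map]
      simp only [hA', if_neg (hlt _), e.injective.eq_iff, Matrix.one_apply]
      rw [Finset.sum_eq_single a]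
      · by_cases hab : a = b
        · subst hab
          simp
          ring
        · simp [hab]
      · intro c _ hc
        simp [hc]
      · simp
    rw [h1, h2]
    ring
  have hdet : (Aᵀ * A).det =
      (∏ q ∈ Finset.univ.filter (fun q : Fin l => k ≤ (q : ℕ)), (w q) ^ 2) *
        ((Ω + ∑ q ∈ Finset.univ.filter (fun q : Fin l => k ≤ (q : ℕ)), (w q) ^ 2) / Ω) := by
    rw [hM, Matrix.det_mul, Matrix.det_diagonal, det_one_add_replicateCol_mul_replicateRow,
      hF, Finset.prod_map, Finset.sum_map]
    congr 1
    simp only [dotProduct]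
    rw [← Finset.sum_mul]
    field_simp
  refine ⟨hdet, ?_⟩
  intro W₁ W₂ t₁ t₂ S hS hc ht hW
  have hSF : S ⊆ Finset.univ.filter (fun q : Fin l => k ≤ (q : ℕ)) := by
    intro q hq
    simp [hS q hq]
  have hcF : (Finset.univ.filter (fun q : Fin l => k ≤ (q : ℕ))).card = l - k := by
    rw [hF]
    simp
  have hc2 : (Finset.univ.filter (fun q : Fin l => k ≤ (q : ℕ)) \ S).card = t₂ := by
    rw [Finset.card_sdiff_of_subset hSF, hcF, hc]
    omega
  have e1 : ∀ q ∈ S, w q = W₁ := fun q hq => (hW q (hS q hq)).1 hq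
  have e2 : ∀ q ∈ Finset.univ.filter (fun q : Fin l => k ≤ (q : ℕ)) \ S, w q = W₂ := by
    intro q hq
    simp only [Finset.mem_sdiff, Finset.mem_filter, Finset.mem_univ, true_and] at hq
    exact (hW q hq.1).2 hq.2
  have hP : ∏ q ∈ Finset.univ.filter (fun q : Fin l => k ≤ (q : ℕ)), w q = W₁ ^ t₁ * W₂ ^ t₂ := by
    rw [← Finset.prod_sdiff hSF, Finset.prod_congr rfl e1, Finset.prod_congr rfl e2,
      Finset.prod_const, Finset.prod_const, hc, hc2, mul_comm]
  have hQ : ∑ q ∈ Finset.univ.filter (fun q : Fin l => k ≤ (q : ℕ)), (w q) ^ 2 =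
      t₁ * W₁ ^ 2 + t₂ * W₂ ^ 2 := by
    rw [← Finset.sum_sdiff hSF, Finset.sum_congr (s₁ := S) rfl (fun q hq => congrArg (· ^ 2) (e1 q hq)),
      Finset.sum_congr rfl (fun q hq => congrArg (· ^ 2) (e2 q hq)),
      Finset.sum_const, Finset.sum_const, hc, hc2, add_comm]
    simp
  have hP0 : 0 ≤ W₁ ^ t₁ * W₂ ^ t₂ := by
    rw [← hP]
    exact Finset.prod_nonneg (fun i _ => (hw i).le)
  rw [hdet, Finset.prod_pow, hP, hQ, Real.sqrt_mul (sq_nonneg _), Real.sqrt_sq hP0, add_assoc]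
end

section
/- Let d ≥ 1, r ≥ 1, n = d + r, and let w₁,…,w_n > 0. For each sign vector j = (j₁,…,j_d) ∈ {−1,1}^d define v_j = Σ_{i=1}^{d} j_i w_i e_i + Σ_{i=d+1}^{n} w_i e_i ∈ ℝ^n, where e_i are the standard basis vectors. Then the positive hull (the set of all finite nonnegative linear combinations) of the 2^d vectors {v_j : j ∈ {−1,1}^d} equals the set {y ∈ ℝ^n : there exists t ≥ 0 such that y_i = w_i t for all i > d and |y_i| ≤ w_i t for all i ≤ d}. -/
theorem aux_sum_prod {d : ℕ} (f : Fin d → Bool → ℝ) :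
    ∑ s : Fin d → Bool, ∏ i, f i (s i) = ∏ i, (f i true + f i false) := by
  have h := Finset.prod_univ_sum (fun _ : Fin d => (Finset.univ : Finset Bool)) f
  simp only [Fintype.piFinset_univ, Fintype.sum_bool] at h
  exact h.symm

theorem aux_sum_sign {d : ℕ} (u : Fin d → ℝ) (k : Fin d) :
    ∑ s : Fin d → Bool, (∏ i, (if s i then (1 + u i) / 2 else (1 - u i) / 2)) *
      (if s k then (1:ℝ) else -1) = u k := by
  have h := aux_sum_prod (fun i b => (if b then (1 + u i) / 2 else (1 - u i) / 2) *
    (if i = k then (if b then (1:ℝ) else -1) else 1))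
  simp only [Finset.prod_mul_distrib, Finset.prod_ite_eq', Finset.mem_univ, if_true] at h
  rw [h, Finset.prod_eq_single k]
  · simp; ring
  · intro b _ hb
    simp [hb]; ring
  · simp

theorem aux_sum_one {d : ℕ} (u : Fin d → ℝ) :
    ∑ s : Fin d → Bool, (∏ i, (if s i then (1 + u i) / 2 else (1 - u i) / 2)) = 1 := by
  have h := aux_sum_prod (fun i b => (if b then (1 + u i) / 2 else (1 - u i) / 2))
  rw [h]
  apply Finset.prod_eq_one
  intro i _
  simp; ring

/-- The positive hull of the `2^d` outward normal vectors
`v_j = ∑_{i≤d} j_i w_i e_i + ∑_{i>d} w_i e_i`, `j ∈ {−1,1}^d`, equals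
`{y : ∃ t ≥ 0, y_i = w_i t for i > d and |y_i| ≤ w_i t for i ≤ d}`. -/
theorem positive_hull_outward_normals_eq
    (d r n : ℕ) (hd : 1 ≤ d) (hr : 1 ≤ r) (hn : n = d + r)
    (w : Fin n → ℝ) (hw : ∀ i, 0 < w i)
    (v : (Fin d → ℝ) → (Fin n → ℝ))
    (hv : ∀ j : Fin d → ℝ, v j =
      fun i : Fin n => if h : (i : ℕ) < d then j ⟨(i : ℕ), h⟩ * w i else w i) :
    {y : Fin n → ℝ | ∃ c : (Fin d → Bool) → ℝ, (∀ s, 0 ≤ c s) ∧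
        y = ∑ s : Fin d → Bool, c s • v (fun i => if s i then 1 else -1)} =
      {y : Fin n → ℝ | ∃ t : ℝ, 0 ≤ t ∧
        (∀ i : Fin n, d ≤ (i : ℕ) → y i = w i * t) ∧
        (∀ i : Fin n, (i : ℕ) < d → |y i| ≤ w i * t)} := by
  ext y
  simp only [Set.mem_setOf_eq]
  constructor
  · rintro ⟨c, hc, rfl⟩
    refine ⟨∑ s, c s, Finset.sum_nonneg fun s _ => hc s, ?_, ?_⟩
    · intro i hi
      simp only [Finset.sum_apply, Pi.smul_apply, hv, dif_neg (not_lt.mpr hi), smul_eq_mul,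
        Finset.mul_sum]
      exact Finset.sum_congr rfl fun s _ => mul_comm _ _
    · intro i hi
      simp only [Finset.sum_apply, Pi.smul_apply, hv, dif_pos hi, smul_eq_mul, Finset.mul_sum]
      refine (Finset.abs_sum_le_sum_abs _ _).trans (Finset.sum_le_sum fun s _ => ?_)
      rw [abs_mul, abs_mul, abs_of_nonneg (hc s), abs_of_pos (hw i)]
      split_ifs <;> simp [mul_comm]
  · rintro ⟨t, ht, h1, h2⟩
    have hdn : d ≤ n := by omega
    let u : Fin d → ℝ := fun i => y (Fin.castLE hdn i) / (w (Fin.castLE hdn i) * t)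
    have hu : ∀ i, |u i| ≤ 1 := by
      intro i
      have hp : 0 ≤ w (Fin.castLE hdn i) * t := mul_nonneg (hw _).le ht
      simp only [u, abs_div, abs_of_nonneg hp]
      exact div_le_one_of_le₀ (h2 _ (by simp)) hp
    refine ⟨fun s => t * ∏ i, (if s i then (1 + u i) / 2 else (1 - u i) / 2), ?_, ?_⟩
    · intro s
      refine mul_nonneg ht (Finset.prod_nonneg fun i _ => ?_)
      have := abs_le.mp (hu i)
      split_ifs <;> linarith
    · ext i
      by_cases hi : (i : ℕ) < d
      · simp only [Finset.sum_apply, Pi.smul_apply, hv, dif_pos hi, smul_eq_mul]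
        have h := aux_sum_sign u ⟨i, hi⟩
        have e : y i = w i * t * u ⟨i, hi⟩ := by
          have hu' : u ⟨i, hi⟩ = y i / (w i * t) := rfl
          rw [hu']
          rcases eq_or_ne t 0 with h0 | h0
          · have := h2 i hi
            subst h0
            simpa using this
          · have := (hw i).ne'
            field_simp
        rw [e, ← h, Finset.mul_sum]
        exact Finset.sum_congr rfl fun s _ => by ring
      · simp only [Finset.sum_apply, Pi.smul_apply, hv, dif_neg hi, smul_eq_mul]
        rw [h1 i (not_lt.mp hi), ← Finset.sum_mul, ← Finset.mul_sum, aux_sum_one]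
        ring
end

section
/- Define G(x) = (2/√π) ∫_0^x e^{−y²} dy and g(x) = (2/√π) e^{−x²} (so g = G'). Let C > 0, W > 0, and D₁, D₂ ≥ 0 with D₁ + D₂ > 0. Then the equation 2C − D₁ g(x)/(x G(x)) − D₂ W g(Wx)/(x G(Wx)) = 0 has exactly one solution x₀ in (0, ∞). -/
/-- The error-function normalization `G(x) = (2/√π) ∫_0^x e^{−y²} dy`. -/
noncomputable def erfG (x : ℝ) : ℝ := (2 / Real.sqrt Real.pi) * ∫ y in (0:ℝ)..x, Real.exp (-y ^ 2)

/-- `g(x) = (2/√π) e^{−x²}`, the derivative of `erfG`. -/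
noncomputable def erfg (x : ℝ) : ℝ := (2 / Real.sqrt Real.pi) * Real.exp (-x ^ 2)

noncomputable def erfPhi (x : ℝ) : ℝ := erfg x / (x * erfG x)

lemma erf_c_pos : 0 < 2 / Real.sqrt Real.pi := by
  have := Real.pi_pos
  positivity

lemma erf_cont : Continuous (fun y : ℝ => Real.exp (-y ^ 2)) := by fun_prop

lemma erfg_pos (x : ℝ) : 0 < erfg x := mul_pos erf_c_pos (Real.exp_pos _)

lemma erfG_lower {x : ℝ} (hx : 0 < x) : x * erfg x ≤ erfG x := by
  have h : ∫ y in (0:ℝ)..x, Real.exp (-x ^ 2) ≤ ∫ y in (0:ℝ)..x, Real.exp (-y ^ 2) := by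
    apply intervalIntegral.integral_mono_on hx.le (by simp) (erf_cont.intervalIntegrable _ _)
    intro y hy
    apply Real.exp_le_exp.2
    nlinarith [hy.1, hy.2]
  rw [intervalIntegral.integral_const] at h
  simp only [sub_zero, smul_eq_mul] at h
  have := mul_le_mul_of_nonneg_left h erf_c_pos.le
  unfold erfg erfG
  linarith

lemma erfG_upper {x : ℝ} (hx : 0 < x) : erfG x ≤ x * (2 / Real.sqrt Real.pi) := by
  have h : ∫ y in (0:ℝ)..x, Real.exp (-y ^ 2) ≤ ∫ y in (0:ℝ)..x, (1:ℝ) := by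
    apply intervalIntegral.integral_mono_on hx.le (erf_cont.intervalIntegrable _ _) (by simp)
    intro y hy
    apply Real.exp_le_one_iff.2
    nlinarith [hy.1, hy.2]
  rw [intervalIntegral.integral_const] at h
  simp only [sub_zero, smul_eq_mul, mul_one] at h
  have := mul_le_mul_of_nonneg_left h erf_c_pos.le
  unfold erfG
  linarith

lemma erfG_pos {x : ℝ} (hx : 0 < x) : 0 < erfG x :=
  lt_of_lt_of_le (mul_pos hx (erfg_pos x)) (erfG_lower hx)

lemma erfG_mono {x y : ℝ} (hxy : x ≤ y) : erfG x ≤ erfG y := by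
  unfold erfG
  apply mul_le_mul_of_nonneg_left _ erf_c_pos.le
  rw [← sub_nonneg, intervalIntegral.integral_interval_sub_left
    (erf_cont.intervalIntegrable _ _) (erf_cont.intervalIntegrable _ _)]
  exact intervalIntegral.integral_nonneg hxy (fun u _ => (Real.exp_pos _).le)

lemma erfG_continuous : Continuous erfG := by
  unfold erfG
  exact continuous_const.mul
    (intervalIntegral.continuous_primitive (fun a b => erf_cont.intervalIntegrable a b) 0)

lemma erfg_continuous : Continuous erfg := by
  unfold erfg
  fun_prop

lemma erfPhi_contAt {x : ℝ} (hx : 0 < x) : ContinuousAt erfPhi x := by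
  unfold erfPhi
  exact erfg_continuous.continuousAt.div (continuous_id.mul erfG_continuous).continuousAt
    (mul_pos hx (erfG_pos hx)).ne'

lemma erfPhi_anti {x y : ℝ} (hx : 0 < x) (hxy : x < y) : erfPhi y < erfPhi x := by
  unfold erfPhi
  have h1 : erfg y ≤ erfg x := by
    unfold erfg
    apply mul_le_mul_of_nonneg_left _ erf_c_pos.le
    apply Real.exp_le_exp.2
    nlinarith
  have h2 : x * erfG x < y * erfG y :=
    mul_lt_mul hxy (erfG_mono hxy.le) (erfG_pos hx) (hx.trans hxy).le
  exact div_lt_div₀' h1 h2 (erfg_pos x) (mul_pos hx (erfG_pos hx))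

lemma erfPhi_upper {x : ℝ} (hx : 0 < x) : x ^ 2 * erfPhi x ≤ 1 := by
  have hG := erfG_pos hx
  have e : x ^ 2 * erfPhi x = x * erfg x / erfG x := by
    unfold erfPhi
    field_simp
  rw [e, div_le_one hG]
  exact erfG_lower hx

lemma erfPhi_lower {x : ℝ} (hx : 0 < x) : 1 - x ^ 2 ≤ x ^ 2 * erfPhi x := by
  have hG := erfG_pos hx
  have e : x ^ 2 * erfPhi x = x * erfg x / erfG x := by
    unfold erfPhi
    field_simp
  have h1 : Real.exp (-x ^ 2) ≤ x * erfg x / erfG x := by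
    rw [le_div_iff₀ hG]
    have := mul_le_mul_of_nonneg_left (erfG_upper hx) (Real.exp_pos (-x ^ 2)).le
    unfold erfg
    linarith
  rw [e]
  linarith [Real.add_one_le_exp (-x ^ 2)]

theorem external_angle_stationary_point_unique
    (C W D₁ D₂ : ℝ) (hC : 0 < C) (hW : 0 < W)
    (hD₁ : 0 ≤ D₁) (hD₂ : 0 ≤ D₂) (hD : 0 < D₁ + D₂) :
    ∃! x : ℝ, 0 < x ∧
      2 * C - D₁ * erfg x / (x * erfG x) - D₂ * W * erfg (W * x) / (x * erfG (W * x)) = 0 := by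
  set F : ℝ → ℝ := fun x => D₁ * erfPhi x + D₂ * W ^ 2 * erfPhi (W * x) with hF
  have key : ∀ x : ℝ, 0 < x → (2 * C - D₁ * erfg x / (x * erfG x)
      - D₂ * W * erfg (W * x) / (x * erfG (W * x)) = 2 * C - F x) := by
    intro x hx
    have h1 := erfG_pos hx
    have h2 := erfG_pos (mul_pos hW hx)
    simp only [hF, erfPhi]
    field_simp
    ring
  have hanti : ∀ x y : ℝ, 0 < x → x < y → F y < F x := by
    intro x y hx hxy
    have h1 := erfPhi_anti hx hxy
    have h2 := erfPhi_anti (mul_pos hW hx) (mul_lt_mul_of_pos_left hxy hW)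
    have hW2 : 0 < W ^ 2 := by positivity
    simp only [hF]
    rcases hD₁.eq_or_lt with h | h
    · have hd : 0 < D₂ * W ^ 2 := mul_pos (by linarith) hW2
      have := mul_lt_mul_of_pos_left h2 hd
      rw [← h]
      linarith
    · have a1 := mul_lt_mul_of_pos_left h1 h
      have a2 := mul_le_mul_of_nonneg_left h2.le (mul_nonneg hD₂ hW2.le)
      linarith
  have hup : ∀ x : ℝ, 0 < x → x ^ 2 * F x ≤ D₁ + D₂ := by
    intro x hx
    have h1 := mul_le_mul_of_nonneg_left (erfPhi_upper hx) hD₁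
    have h2 := mul_le_mul_of_nonneg_left (erfPhi_upper (mul_pos hW hx)) hD₂
    simp only [hF]
    linarith
  have hlo : ∀ x : ℝ, 0 < x → (D₁ + D₂) * (1 - (1 + W ^ 2) * x ^ 2) ≤ x ^ 2 * F x := by
    intro x hx
    have h1 := mul_le_mul_of_nonneg_left (erfPhi_lower hx) hD₁
    have h2 := mul_le_mul_of_nonneg_left (erfPhi_lower (mul_pos hW hx)) hD₂
    have h3 : 0 ≤ D₁ * (W ^ 2 * x ^ 2) := by positivity
    have h4 : 0 ≤ D₂ * x ^ 2 := by positivity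
    simp only [hF]
    linarith
  have hE : 0 < 2 * C + (D₁ + D₂) * (1 + W ^ 2) := by positivity
  obtain ⟨a, ha, ha2⟩ : ∃ a : ℝ, 0 < a ∧
      (2 * C + (D₁ + D₂) * (1 + W ^ 2)) * a ^ 2 = D₁ + D₂ := by
    refine ⟨Real.sqrt ((D₁ + D₂) / (2 * C + (D₁ + D₂) * (1 + W ^ 2))),
      Real.sqrt_pos.2 (div_pos hD hE), ?_⟩
    rw [Real.sq_sqrt (div_pos hD hE).le, mul_div_cancel₀ _ hE.ne']
  obtain ⟨b, hb, hb2⟩ : ∃ b : ℝ, 0 < b ∧ (2 * C) * b ^ 2 = D₁ + D₂ := by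
    have h2 : 0 < 2 * C := by positivity
    refine ⟨Real.sqrt ((D₁ + D₂) / (2 * C)), Real.sqrt_pos.2 (div_pos hD h2), ?_⟩
    rw [Real.sq_sqrt (div_pos hD h2).le, mul_div_cancel₀ _ h2.ne']
  have hFa : 2 * C ≤ F a := by
    have := hlo a ha
    have ha' : 0 < a ^ 2 := by positivity
    refine le_of_mul_le_mul_left ?_ ha'
    linarith
  have hFb : F b ≤ 2 * C := by
    have := hup b hb
    have hb' : 0 < b ^ 2 := by positivity
    refine le_of_mul_le_mul_left ?_ hb'
    linarith
  have hab : a ≤ b := by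
    by_contra h
    have := hanti b a hb (not_le.1 h)
    linarith
  have hcont : ContinuousOn F (Set.Icc a b) := by
    intro x hx
    have hx0 : 0 < x := ha.trans_le hx.1
    apply ContinuousAt.continuousWithinAt
    have h2 : ContinuousAt (fun x => erfPhi (W * x)) x :=
      ContinuousAt.comp (f := fun x => W * x) (erfPhi_contAt (mul_pos hW hx0))
        (by fun_prop)
    exact (continuousAt_const.mul (erfPhi_contAt hx0)).add (continuousAt_const.mul h2)
  obtain ⟨x, hx, hxF⟩ := intermediate_value_Icc' hab hcont ⟨hFb, hFa⟩
  have hx0 : 0 < x := ha.trans_le hx.1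
  refine ⟨x, ⟨hx0, ?_⟩, ?_⟩
  · rw [key x hx0, hxF, sub_self]
  · rintro y ⟨hy0, hy⟩
    rw [key y hy0] at hy
    rcases lt_trichotomy y x with h | h | h
    · have := hanti y x hy0 h
      linarith
    · exact h
    · have := hanti x y hx0 h
      linarith
end

section
/- Let φ(s) = (1/√(2π)) e^{−s²/2} and Φ(s) = ∫_{−∞}^s φ(u) du be the standard Gaussian density and distribution function. Let t₁, t₂ > 0 and W > 0, and define b = (t₁ + W²t₂)/(t₁ + t₂), Q(s) = t₁φ(s)/((t₁+t₂)Φ(s)) + W t₂ φ(Ws)/((t₁+t₂)Φ(Ws)), and M̂(s) = −s/Q(s). Then for every c with 0 < c < 1/b, the equation M̂(s) = c has exactly one solution s* in (−∞, 0); in fact M̂ restricted to (−∞,0) is a strictly monotone bijection onto (0, 1/b), with M̂(s) → 0 as s → 0⁻ and M̂(s) → 1/b as s → −∞. -/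
open Filter Topology

/-- The standard Gaussian density `φ(s) = e^{−s²/2}/√(2π)`. -/
noncomputable def gaussPdf (s : ℝ) : ℝ := Real.exp (-s ^ 2 / 2) / Real.sqrt (2 * Real.pi)

/-- The standard Gaussian distribution function `Φ(s) = ∫_{−∞}^s φ(u) du`. -/
noncomputable def gaussCdf (s : ℝ) : ℝ := ∫ u in Set.Iic s, gaussPdf u

noncomputable def auxF (p : ℝ) : ℝ := ∫ w in Set.Ioi (0:ℝ), Real.exp (-w - p * w ^ 2)

lemma auxF_exp_int : MeasureTheory.IntegrableOn (fun w : ℝ => Real.exp (-w)) (Set.Ioi 0) :=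
  integrableOn_exp_neg_Ioi 0

lemma auxF_int {p : ℝ} (hp : 0 ≤ p) :
    MeasureTheory.IntegrableOn (fun w : ℝ => Real.exp (-w - p * w ^ 2)) (Set.Ioi 0) := by
  refine MeasureTheory.Integrable.mono' auxF_exp_int
    (by fun_prop) (Eventually.of_forall fun w => ?_)
  rw [Real.norm_eq_abs, abs_of_pos (Real.exp_pos _)]
  apply Real.exp_le_exp.2
  nlinarith [mul_nonneg hp (sq_nonneg w)]

lemma auxF_zero : auxF 0 = 1 := by
  simpa only [auxF, zero_mul, sub_zero] using integral_exp_neg_Ioi_zero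

lemma setint_pos {f : ℝ → ℝ} (hf : MeasureTheory.IntegrableOn f (Set.Ioi 0))
    (h : ∀ w > 0, 0 < f w) : 0 < ∫ w in Set.Ioi (0:ℝ), f w := by
  rw [MeasureTheory.setIntegral_pos_iff_support_of_nonneg_ae]
  · have : Function.support f ∩ Set.Ioi 0 = Set.Ioi 0 := by
      apply Set.inter_eq_right.2
      intro w hw
      exact (h w hw).ne'
    rw [this]; simp
  · filter_upwards [MeasureTheory.ae_restrict_mem measurableSet_Ioi] with w hw
    exact (h w hw).le
  · exact hf

lemma auxF_pos {p : ℝ} (hp : 0 ≤ p) : 0 < auxF p :=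
  setint_pos (auxF_int hp) fun _ _ => Real.exp_pos _

lemma auxF_anti {p q : ℝ} (hp : 0 ≤ p) (hpq : p < q) : auxF q < auxF p := by
  have hq : 0 ≤ q := hp.trans hpq.le
  have := setint_pos ((auxF_int hp).sub (auxF_int hq)) (by
    intro w hw
    simp only [Pi.sub_apply, sub_pos]
    apply Real.exp_lt_exp.2
    nlinarith [mul_pos (sub_pos.2 hpq) (pow_pos hw 2)])
  simp only [Pi.sub_apply] at this
  rw [MeasureTheory.integral_sub (auxF_int hp) (auxF_int hq)] at this
  simpa [auxF] using this

lemma auxF_tendsto {l : Filter ℝ} [l.IsCountablyGenerated] (hl : ∀ᶠ p in l, 0 ≤ p) (f : ℝ → ℝ)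
    (h : ∀ w > 0, Tendsto (fun p : ℝ => Real.exp (-w - p * w ^ 2)) l (𝓝 (f w))) :
    Tendsto auxF l (𝓝 (∫ w in Set.Ioi (0:ℝ), f w)) := by
  refine MeasureTheory.tendsto_integral_filter_of_dominated_convergence
    (fun w => Real.exp (-w)) (Eventually.of_forall fun p => by fun_prop) ?_ auxF_exp_int ?_
  · filter_upwards [hl] with p hp
    refine Eventually.of_forall fun w => ?_
    rw [Real.norm_eq_abs, abs_of_pos (Real.exp_pos _)]
    apply Real.exp_le_exp.2
    nlinarith [mul_nonneg hp (sq_nonneg w)]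
  · filter_upwards [MeasureTheory.ae_restrict_mem measurableSet_Ioi] with w hw
    exact h w hw

lemma auxF_cont : ContinuousOn auxF (Set.Ici 0) := by
  intro p hp
  refine auxF_tendsto self_mem_nhdsWithin _ fun w hw => ?_
  have : Continuous fun p : ℝ => Real.exp (-w - p * w ^ 2) := by fun_prop
  exact this.continuousWithinAt

lemma auxF_atTop : Tendsto auxF atTop (𝓝 0) := by
  have := auxF_tendsto (eventually_ge_atTop 0) (fun _ => 0) fun w hw => by
    apply Real.tendsto_exp_atBot.comp
    apply tendsto_atBot_add_const_left _ (-w) _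
    exact tendsto_neg_atTop_atBot.comp (tendsto_id.atTop_mul_const (pow_pos hw 2))
  simpa using this

lemma gaussCdf_eq {x : ℝ} (hx : x < 0) :
    gaussCdf x = gaussPdf x / (-x) * auxF (1 / (2 * x ^ 2)) := by
  have hx0 : x ≠ 0 := hx.ne
  have him : (fun w : ℝ => x + w / x) '' Set.Ioi 0 = Set.Iio x := by
    ext y
    constructor
    · rintro ⟨w, hw, rfl⟩
      have := div_neg_of_pos_of_neg (Set.mem_Ioi.1 hw) hx
      simp only [Set.mem_Iio]; linarith
    · intro hy
      refine ⟨(y - x) * x, mul_pos_of_neg_of_neg (sub_neg.2 hy) hx, ?_⟩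
      field_simp; ring
  have key := MeasureTheory.integral_image_eq_integral_abs_deriv_smul
    (s := Set.Ioi (0:ℝ)) (f := fun w : ℝ => x + w / x) (f' := fun _ => 1 / x)
    measurableSet_Ioi (fun w _ => (((hasDerivAt_id w).div_const x).const_add x).hasDerivWithinAt)
    (fun a _ c _ h => by
      have h' : x + a / x = x + c / x := h
      field_simp at h'; linarith) gaussPdf
  rw [him] at key
  rw [gaussCdf, MeasureTheory.integral_Iic_eq_integral_Iio, key, auxF,
    ← MeasureTheory.integral_const_mul]
  congr 1
  ext w
  rw [abs_of_neg (one_div_neg.2 hx), gaussPdf, gaussPdf, smul_eq_mul]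
  have : -(x + w / x) ^ 2 / 2 = -x ^ 2 / 2 + (-w - 1 / (2 * x ^ 2) * w ^ 2) := by
    field_simp; ring
  rw [this, Real.exp_add]
  field_simp

theorem internal_angle_stationary_point_unique
    (t₁ t₂ W : ℝ) (ht₁ : 0 < t₁) (ht₂ : 0 < t₂) (hW : 0 < W)
    (b : ℝ) (hb : b = (t₁ + W ^ 2 * t₂) / (t₁ + t₂))
    (Q : ℝ → ℝ)
    (hQ : ∀ s, Q s = t₁ * gaussPdf s / ((t₁ + t₂) * gaussCdf s)
        + W * t₂ * gaussPdf (W * s) / ((t₁ + t₂) * gaussCdf (W * s)))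
    (Mhat : ℝ → ℝ) (hM : ∀ s, Mhat s = -s / Q s) :
    StrictAntiOn Mhat (Set.Iio 0) ∧
    Mhat '' Set.Iio 0 = Set.Ioo 0 (1 / b) ∧
    Tendsto Mhat (𝓝[<] 0) (𝓝 0) ∧
    Tendsto Mhat atBot (𝓝 (1 / b)) ∧
    ∀ c : ℝ, 0 < c → c < 1 / b → ∃! s : ℝ, s < 0 ∧ Mhat s = c := by
  have hpdf : ∀ s, 0 < gaussPdf s := fun s => by unfold gaussPdf; positivity
  have hW2 : 0 < W ^ 2 := by positivity
  -- the function in the variable `p = 1/(2s²)`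
  obtain ⟨G, hG⟩ : ∃ G : ℝ → ℝ, ∀ p, G p =
      (t₁ + t₂) / (t₁ / auxF p + W ^ 2 * t₂ / auxF (p / W ^ 2)) := ⟨_, fun _ => rfl⟩
  have hMG : ∀ s < 0, Mhat s = G (1 / (2 * s ^ 2)) := by
    intro s hs
    have hWs : W * s < 0 := mul_neg_of_pos_of_neg hW hs
    have e : 1 / (2 * (W * s) ^ 2) = 1 / (2 * s ^ 2) / W ^ 2 := by
      have := hs.ne
      field_simp
    have hF1 : 0 < auxF (1 / (2 * s ^ 2)) := auxF_pos (by positivity)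
    have hF2 : 0 < auxF (1 / (2 * s ^ 2) / W ^ 2) := auxF_pos (by positivity)
    rw [hM, hQ, hG, gaussCdf_eq hs, gaussCdf_eq hWs, e]
    have h1 := hpdf s
    have h2 := hpdf (W * s)
    generalize auxF (1 / (2 * s ^ 2)) = A at *
    generalize auxF (1 / (2 * s ^ 2) / W ^ 2) = B at *
    generalize gaussPdf s = C at *
    generalize gaussPdf (W * s) = D at *
    have hs0 := hs.ne
    have e2 : t₁ * C / ((t₁ + t₂) * (C / -s * A)) +
        W * t₂ * D / ((t₁ + t₂) * (D / -(W * s) * B))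
        = (-s) * ((t₁ / A + W ^ 2 * t₂ / B) / (t₁ + t₂)) := by
      field_simp
      ring
    rw [e2]
    have : 0 < t₁ / A + W ^ 2 * t₂ / B := by positivity
    generalize t₁ / A + W ^ 2 * t₂ / B = K at *
    field_simp
  have hGpos : ∀ p, 0 ≤ p → 0 < G p := by
    intro p hp
    have hF1 := auxF_pos hp
    have hF2 : 0 < auxF (p / W ^ 2) := auxF_pos (by positivity)
    rw [hG]; positivity
  have hGanti : ∀ p q, 0 ≤ p → p < q → G q < G p := by
    intro p q hp hpq
    have hq := hp.trans hpq.le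
    have hF1 := auxF_pos hp
    have hF2 : 0 < auxF (p / W ^ 2) := auxF_pos (by positivity)
    have hF3 := auxF_pos hq
    have hF4 : 0 < auxF (q / W ^ 2) := auxF_pos (by positivity)
    have l1 := auxF_anti hp hpq
    have l2 : auxF (q / W ^ 2) < auxF (p / W ^ 2) :=
      auxF_anti (by positivity) (by gcongr)
    rw [hG, hG]
    gcongr
  have hG0 : G 0 = 1 / b := by
    rw [hG, hb]; simp [auxF_zero]
  have hGcont : ContinuousOn G (Set.Ici 0) := by
    have c2 : ContinuousOn (fun p => auxF (p / W ^ 2)) (Set.Ici 0) :=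
      auxF_cont.comp (by fun_prop) (fun p hp => div_nonneg hp hW2.le)
    rw [funext hG]
    refine continuousOn_const.div ((continuousOn_const.div auxF_cont ?_).add
      (continuousOn_const.div c2 ?_)) ?_
    · intro p hp; exact (auxF_pos hp).ne'
    · intro p hp; exact (auxF_pos (div_nonneg hp hW2.le)).ne'
    · intro p hp
      have := auxF_pos hp
      have := auxF_pos (div_nonneg hp hW2.le)
      positivity
  have hGtop : Tendsto G atTop (𝓝 0) := by
    have hup : Tendsto (fun p => (t₁ + t₂) / t₁ * auxF p) atTop (𝓝 0) := by
      simpa using auxF_atTop.const_mul ((t₁ + t₂) / t₁)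
    refine tendsto_of_tendsto_of_tendsto_of_le_of_le' tendsto_const_nhds hup ?_ ?_
    · filter_upwards [eventually_ge_atTop 0] with p hp using (hGpos p hp).le
    · filter_upwards [eventually_ge_atTop 0] with p hp
      have hF1 := auxF_pos hp
      have hF2 : 0 < auxF (p / W ^ 2) := auxF_pos (by positivity)
      have : (t₁ + t₂) / t₁ * auxF p = (t₁ + t₂) / (t₁ / auxF p) := by field_simp
      rw [hG, this]
      gcongr
      have : 0 < W ^ 2 * t₂ / auxF (p / W ^ 2) := by positivity
      linarith
  have hanti : StrictAntiOn Mhat (Set.Iio 0) := by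
    intro s hs s' hs' hss
    simp only [Set.mem_Iio] at hs hs'
    rw [hMG s hs, hMG s' hs']
    apply hGanti _ _ (by positivity)
    have h1 : 0 < s' ^ 2 := by have := hs'.ne; positivity
    apply one_div_lt_one_div_of_lt (by positivity)
    nlinarith
  have hcont : ContinuousOn Mhat (Set.Iio 0) := by
    have : ContinuousOn (fun s : ℝ => G (1 / (2 * s ^ 2))) (Set.Iio 0) := by
      refine hGcont.comp (continuousOn_const.div (by fun_prop) ?_) ?_
      · intro s hs
        have := (Set.mem_Iio.1 hs).ne
        positivity
      · intro s _
        simp only [Set.mem_Ici]; positivity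
    exact this.congr fun s hs => hMG s hs
  have hlim0 : Tendsto Mhat (𝓝[<] 0) (𝓝 0) := by
    have hp : Tendsto (fun s : ℝ => 1 / (2 * s ^ 2)) (𝓝[<] 0) atTop := by
      simp only [one_div]
      apply tendsto_inv_nhdsGT_zero.comp
      apply tendsto_nhdsWithin_of_tendsto_nhds_of_eventually_within
      · have : Continuous fun s : ℝ => 2 * s ^ 2 := by fun_prop
        simpa using (this.tendsto 0).mono_left nhdsWithin_le_nhds
      · filter_upwards [self_mem_nhdsWithin] with s hs
        have := (Set.mem_Iio.1 hs).ne
        simp only [Set.mem_Ioi]; positivity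
    refine (hGtop.comp hp).congr' ?_
    filter_upwards [self_mem_nhdsWithin] with s hs
    exact (hMG s hs).symm
  have hlimb : Tendsto Mhat atBot (𝓝 (1 / b)) := by
    have hp : Tendsto (fun s : ℝ => 1 / (2 * s ^ 2)) atBot (𝓝[Set.Ici 0] 0) := by
      apply tendsto_nhdsWithin_of_tendsto_nhds_of_eventually_within
      · simp only [one_div]
        apply tendsto_inv_atTop_zero.comp
        apply Tendsto.const_mul_atTop (by norm_num)
        simpa [Function.comp_def] using
          (tendsto_pow_atTop (α := ℝ) two_ne_zero).comp tendsto_neg_atBot_atTop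
      · refine Eventually.of_forall fun s => ?_
        simp only [Set.mem_Ici]; positivity
    have h0 : Tendsto G (𝓝[Set.Ici 0] 0) (𝓝 (1 / b)) := hG0 ▸ hGcont 0 Set.self_mem_Ici
    refine (h0.comp hp).congr' ?_
    filter_upwards [eventually_lt_atBot 0] with s hs
    exact (hMG s hs).symm
  have himg : Mhat '' Set.Iio 0 = Set.Ioo 0 (1 / b) := by
    apply Set.Subset.antisymm
    · rintro _ ⟨s, hs, rfl⟩
      have hs0 := (Set.mem_Iio.1 hs).ne
      rw [hMG s hs, ← hG0]
      exact ⟨hGpos _ (by positivity), hGanti _ _ le_rfl (by positivity)⟩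
    · exact isPreconnected_Iio.intermediate_value_Ioo
        (le_principal_iff.2 self_mem_nhdsWithin)
        (le_principal_iff.2 (Iio_mem_atBot 0)) hcont hlim0 hlimb
  refine ⟨hanti, himg, hlim0, hlimb, fun c hc hcb => ?_⟩
  obtain ⟨s, hs, hsc⟩ : c ∈ Mhat '' Set.Iio 0 := himg ▸ ⟨hc, hcb⟩
  exact ⟨s, ⟨hs, hsc⟩, fun s' h' => hanti.injOn h'.1 hs (h'.2.trans hsc.symm)⟩
end
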